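/- For every integer d ≥ 2, the formal power series identity C^{d,2}(x) = C^d(x) + x^{d+2}/((1−2x)·F_{d+2}(x)) holds, i.e. (1−2x)·F_{d+2}(x)·(C^{d,2}(x) − C^d(x)) = x^{d+2}. Consequently, for all integers n,d ≥ 2, C^{d,2}_n = C^d_n + Σ_{i=1}^{n−d} 2^{i−1} Σ_α (−1)^{n−d−i−ℓ(α)} Π_{j=1}^{ℓ(α)} binom(d+1−α_j, α_j), where the inner sum is over all compositions α of n−d−i with max(α) ≤ (d+1)/2 (the empty composition of 0 contributing the empty product 1). -/

import Mathlib

/-- Full binary trees (every internal node has exactly two children). -/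
inductive BTree : Type
  | leaf : BTree
  | node : BTree → BTree → BTree
deriving DecidableEq

namespace BTree

/-- Number of leaves of a full binary tree. -/
def numLeaves : BTree → ℕ
  | leaf => 1
  | node l r => l.numLeaves + r.numLeaves

/-- The list of pairs (left depth, right depth) of the leaves, in preorder. -/
def leafDepths : BTree → List (ℕ × ℕ)
  | leaf => [(0, 0)]
  | node l r =>
      (l.leafDepths.map fun p => (p.1 + 1, p.2)) ++ (r.leafDepths.map fun p => (p.1, p.2 + 1))

/-- The left depth sequence `ld(t)` of the leaves of `t`, in preorder. -/
def ld (t : BTree) : List ℕ := t.leafDepths.map Prod.fst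

/-- The right depth sequence `rd(t)` of the leaves of `t`, in preorder. -/
def rd (t : BTree) : List ℕ := t.leafDepths.map Prod.snd

end BTree

/-- `b ~^d c` : the sequences have equal length and agree at every position where
either entry is `< d`. -/
def DepthEq (d : ℕ) : List ℕ → List ℕ → Prop :=
  List.Forall₂ (fun a b => min a b < d → a = b)

/-- `b ~_k c` : entrywise congruence mod `k` (and equal length). -/
def ModListEq (k : ℕ) : List ℕ → List ℕ → Prop :=
  List.Forall₂ (fun a b => a % k = b % k)

/-- The relation `t ~ t'` iff `ld(t) ~^d ld(t')` and `rd(t) ~^e rd(t')`. -/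
def DeRel (d e : ℕ) (t t' : BTree) : Prop :=
  DepthEq d t.ld t'.ld ∧ DepthEq e t.rd t'.rd

/-- The relation `t ~ t'` iff `ld(t) ~_k^d ld(t')` (i.e. `ld(t) ~_k ld(t')` and
`ld(t) ~^d ld(t')`). -/
def DkRel (d k : ℕ) (t t' : BTree) : Prop :=
  ModListEq k t.ld t'.ld ∧ DepthEq d t.ld t'.ld

/-- `T_n`: full binary trees with `n+1` leaves. -/
def Tn (n : ℕ) : Type := {t : BTree // t.numLeaves = n + 1}

/-- `C^{d,e}_n`: the number of equivalence classes of the relation `DeRel d e` on `T_n`. -/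
noncomputable def Cde (d e n : ℕ) : ℕ :=
  Nat.card (Quot (fun t t' : Tn n => DeRel d e t.1 t'.1))

/-- `C^d_{k,n}`: the number of equivalence classes of `ld(t) ~_k^d ld(t')` on `T_n`. -/
noncomputable def Cdk (d k n : ℕ) : ℕ :=
  Nat.card (Quot (fun t t' : Tn n => DkRel d k t.1 t'.1))

/-- Fibonacci polynomials (as formal power series): `F_0 = 0`, `F_1 = 1`, and
`F_n = F_{n-1} - x·F_{n-2}` for `n ≥ 2`. -/
noncomputable def FibP : ℕ → PowerSeries ℚ
  | 0 => 0
  | 1 => 1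
  | n + 2 => FibP (n + 1) - PowerSeries.X * FibP n

/-- Generating function `C^{d,e}(x) = Σ_{n≥0} C^{d,e}_n x^{n+1}`, with the convention that
a superscript parameter equal to `0` is interpreted as `1`. -/
noncomputable def CdeX (d e : ℕ) : PowerSeries ℚ :=
  PowerSeries.mk fun m => match m with
    | 0 => 0
    | n + 1 => (Cde (max d 1) (max e 1) n : ℚ)


/-! ## Truncated depth lists -/

namespace BTree

/-- The truncated list of depth pairs. -/
def key (d e : ℕ) (t : BTree) : List (ℕ × ℕ) :=
  t.leafDepths.map fun p => (min p.1 d, min p.2 e)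

/-- Mirror image. -/
def mirror : BTree → BTree
  | leaf => leaf
  | node l r => node r.mirror l.mirror

theorem mirror_mirror (t : BTree) : t.mirror.mirror = t := by
  induction t with
  | leaf => rfl
  | node l r hl hr => simp [mirror, hl, hr]

theorem numLeaves_mirror (t : BTree) : t.mirror.numLeaves = t.numLeaves := by
  induction t with
  | leaf => rfl
  | node l r hl hr => simp [mirror, numLeaves, hl, hr, add_comm]

theorem leafDepths_mirror (t : BTree) :
    t.mirror.leafDepths = (t.leafDepths.map Prod.swap).reverse := by
  induction t with
  | leaf => rfl
  | node l r hl hr =>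
    simp [mirror, leafDepths, hl, hr, Function.comp_def, Prod.swap]

theorem key_mirror (d e : ℕ) (t : BTree) :
    key e d t.mirror = ((key d e t).map Prod.swap).reverse := by
  simp [key, leafDepths_mirror, Function.comp_def, Prod.swap]

theorem length_leafDepths (t : BTree) : t.leafDepths.length = t.numLeaves := by
  induction t with
  | leaf => rfl
  | node l r hl hr => simp [leafDepths, numLeaves, hl, hr]

theorem length_key (d e : ℕ) (t : BTree) : (key d e t).length = t.numLeaves := by
  simp [key, length_leafDepths]

theorem numLeaves_pos (t : BTree) : 0 < t.numLeaves := by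
  induction t with
  | leaf => simp [numLeaves]
  | node l r hl hr => simp [numLeaves]; omega

theorem leafDepths_last (t : BTree) :
    ∃ M x, t.leafDepths = M ++ [x] ∧ x.1 = 0 ∧ ∀ y ∈ M, y.1 ≠ 0 := by
  induction t with
  | leaf => exact ⟨[], (0, 0), rfl, rfl, by simp⟩
  | node l r hl hr =>
    obtain ⟨M, x, h1, h2, h3⟩ := hr
    refine ⟨(l.leafDepths.map fun p => (p.1 + 1, p.2)) ++ (M.map fun p => (p.1, p.2 + 1)),
      (x.1, x.2 + 1), ?_, h2, ?_⟩
    · simp [leafDepths, h1]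
    · intro y hy
      simp only [List.mem_append, List.mem_map] at hy
      rcases hy with ⟨p, _, rfl⟩ | ⟨p, hp, rfl⟩
      · simp
      · exact h3 p hp

theorem leafDepths_head (t : BTree) :
    ∃ x M, t.leafDepths = x :: M ∧ x.2 = 0 ∧ ∀ y ∈ M, y.2 ≠ 0 := by
  induction t with
  | leaf => exact ⟨(0, 0), [], rfl, rfl, by simp⟩
  | node l r hl hr =>
    obtain ⟨x, M, h1, h2, h3⟩ := hl
    refine ⟨(x.1 + 1, x.2), (M.map fun p => (p.1 + 1, p.2)) ++
      (r.leafDepths.map fun p => (p.1, p.2 + 1)), ?_, h2, ?_⟩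
    · simp [leafDepths, h1]
    · intro y hy
      simp only [List.mem_append, List.mem_map] at hy
      rcases hy with ⟨p, hp, rfl⟩ | ⟨p, hp, rfl⟩
      · exact h3 p hp
      · simp

/-- Gluing truncated lists. -/
def glue (L R : List (ℕ × ℕ)) : List (ℕ × ℕ) :=
  (L.map fun p => (p.1 + 1, p.2)) ++ (R.map fun p => (p.1, p.2 + 1))

theorem key_node (d e : ℕ) (l r : BTree) :
    key (d + 1) (e + 1) (node l r) = glue (key d (e + 1) l) (key (d + 1) e r) := by
  simp [key, leafDepths, glue, Function.comp_def, Nat.add_min_add_right]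

theorem split_unique {α : Type*} (P : α → Prop) :
    ∀ (M M' : List α) (x x' : α) (R R' : List α), P x → P x' → (∀ y ∈ M, ¬ P y) →
      (∀ y ∈ M', ¬ P y) → M ++ x :: R = M' ++ x' :: R' → M = M' ∧ x = x' ∧ R = R' := by
  intro M
  induction M with
  | nil =>
    intro M' x x' R R' hx hx' hM hM' h
    cases M' with
    | nil => simpa using h
    | cons a M' =>
      simp at h
      exact absurd (h.1 ▸ hx) (hM' a (by simp))
  | cons b M ih =>
    intro M' x x' R R' hx hx' hM hM' h
    cases M' with
    | nil =>
      simp at h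
      exact absurd (h.1 ▸ hx') (hM b (by simp))
    | cons a M' =>
      simp only [List.cons_append, List.cons.injEq] at h
      have := ih M' x x' R R' hx hx' (fun y hy => hM y (by simp [hy]))
        (fun y hy => hM' y (by simp [hy])) h.2
      exact ⟨by rw [h.1, this.1], this.2⟩

theorem map_fst_inj : Function.Injective
    (List.map fun p : ℕ × ℕ => (p.1 + 1, p.2)) :=
  List.map_injective_iff.2 (fun a b h => by
    simp only [Prod.mk.injEq] at h; ext <;> omega)

theorem map_snd_inj : Function.Injective
    (List.map fun p : ℕ × ℕ => (p.1, p.2 + 1)) :=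
  List.map_injective_iff.2 (fun a b h => by
    simp only [Prod.mk.injEq] at h; ext <;> omega)

theorem key_last (d e : ℕ) (hd : 1 ≤ d) (t : BTree) :
    ∃ M x, key d e t = M ++ [x] ∧ x.1 = 0 ∧ ∀ y ∈ M, y.1 ≠ 0 := by
  obtain ⟨M, x, h1, h2, h3⟩ := leafDepths_last t
  refine ⟨M.map fun p => (min p.1 d, min p.2 e), (min x.1 d, min x.2 e), ?_, ?_, ?_⟩
  · simp [key, h1]
  · simp [h2]
  · intro y hy
    simp only [List.mem_map] at hy
    obtain ⟨p, hp, rfl⟩ := hy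
    have := h3 p hp
    simp only
    omega

theorem glue_inj (d e : ℕ) (hd : 1 ≤ d) (l l' : BTree) (R R' : List (ℕ × ℕ))
    (h : glue (key d e l) R = glue (key d e l') R') :
    key d e l = key d e l' ∧ R = R' := by
  obtain ⟨M, x, h1, h2, h3⟩ := key_last d e hd l
  obtain ⟨M', x', h1', h2', h3'⟩ := key_last d e hd l'
  rw [h1, h1'] at h ⊢
  simp only [glue, List.map_append, List.map_cons, List.map_nil, List.append_assoc,
    List.singleton_append] at h
  have := split_unique (fun p : ℕ × ℕ => p.1 = 1) _ _ _ _ _ _ (by simp [h2]) (by simp [h2'])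
    (by
      intro y hy
      simp only [List.mem_map] at hy
      obtain ⟨p, hp, rfl⟩ := hy
      simpa using h3 p hp)
    (by
      intro y hy
      simp only [List.mem_map] at hy
      obtain ⟨p, hp, rfl⟩ := hy
      simpa using h3' p hp) h
  obtain ⟨e1, e2, e3⟩ := this
  have e1' := map_fst_inj e1
  have e3' := map_snd_inj e3
  have e2' : x = x' := by
    simp only [Prod.mk.injEq] at e2
    ext <;> omega
  exact ⟨by rw [e1', e2'], e3'⟩

theorem finite_numLeaves (n : ℕ) : {t : BTree | t.numLeaves = n}.Finite := by
  induction n using Nat.strong_induction_on with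
  | _ n ih =>
    have : {t : BTree | t.numLeaves = n} ⊆ {leaf} ∪
        ⋃ i : Fin n, ⋃ j : Fin n,
          Set.image2 node {t | t.numLeaves = i.1} {t | t.numLeaves = j.1} := by
      intro t ht
      cases t with
      | leaf => simp
      | node l r =>
        right
        simp only [Set.mem_ofPred_eq, numLeaves] at ht
        have h1 := numLeaves_pos l
        have h2 := numLeaves_pos r
        simp only [Set.mem_iUnion]
        exact ⟨⟨l.numLeaves, by omega⟩, ⟨r.numLeaves, by omega⟩, l, rfl, r, rfl, rfl⟩
    refine Set.Finite.subset ?_ this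
    refine (Set.finite_singleton _).union ?_
    exact Set.finite_iUnion fun i => Set.finite_iUnion fun j =>
      (ih i i.2).image2 _ (ih j j.2)

/-- The finite set of trees with `n` leaves. -/
noncomputable def trees (n : ℕ) : Finset BTree := (finite_numLeaves n).toFinset

theorem mem_trees {n : ℕ} {t : BTree} : t ∈ trees n ↔ t.numLeaves = n := by
  simp [trees]

/-- The finite set of truncated lists. -/
noncomputable def keys (d e n : ℕ) : Finset (List (ℕ × ℕ)) := (trees n).image (key d e)

theorem mem_keys {d e n : ℕ} {L : List (ℕ × ℕ)} :
    L ∈ keys d e n ↔ ∃ t : BTree, t.numLeaves = n ∧ key d e t = L := by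
  simp [keys, mem_trees]

theorem length_of_mem_keys {d e n : ℕ} {L : List (ℕ × ℕ)} (h : L ∈ keys d e n) :
    L.length = n := by
  obtain ⟨t, h1, rfl⟩ := mem_keys.1 h
  rw [length_key, h1]

theorem keys_succ (d e n : ℕ) :
    keys (d + 1) (e + 1) n = (if n = 1 then {[(0, 0)]} else ∅) ∪
      (Finset.HasAntidiagonal.antidiagonal n).biUnion fun p =>
        Finset.image₂ glue (keys d (e + 1) p.1) (keys (d + 1) e p.2) := by
  ext L
  simp only [mem_keys, Finset.mem_union, Finset.mem_biUnion, Finset.HasAntidiagonal.mem_antidiagonal,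
    Finset.mem_image₂]
  constructor
  · rintro ⟨t, h1, rfl⟩
    cases t with
    | leaf => left; simp [numLeaves] at h1; simp [← h1, key, leafDepths]
    | node l r =>
      right
      exact ⟨(l.numLeaves, r.numLeaves), h1, _, ⟨l, rfl, rfl⟩, _, ⟨r, rfl, rfl⟩,
        (key_node d e l r).symm⟩
  · rintro (h | ⟨p, hp, _, ⟨l, hl, rfl⟩, _, ⟨r, hr, rfl⟩, rfl⟩)
    · split_ifs at h with hn
      · refine ⟨leaf, by simp [numLeaves, hn], ?_⟩
        simp at h
        simp [h, key, leafDepths]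
      · simp at h
    · exact ⟨node l r, by simp [numLeaves, hl, hr, hp], key_node d e l r⟩

theorem length_glue (L R : List (ℕ × ℕ)) : (glue L R).length = L.length + R.length := by
  simp [glue]

theorem card_keys_succ (d e n : ℕ) (hd : 1 ≤ d) :
    (keys (d + 1) (e + 1) n).card = (if n = 1 then 1 else 0) +
      ∑ p ∈ Finset.HasAntidiagonal.antidiagonal n, (keys d (e + 1) p.1).card * (keys (d + 1) e p.2).card := by
  rw [keys_succ, Finset.card_union_of_disjoint, Finset.card_biUnion]
  · congr 1
    · split_ifs <;> simp
    · refine Finset.sum_congr rfl fun p _ => ?_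
      rw [Finset.card_image₂_iff.2]
      rintro ⟨L, R⟩ h ⟨L', R'⟩ h' heq
      simp only [Set.mem_prod, Finset.mem_coe] at h h'
      obtain ⟨l, _, rfl⟩ := mem_keys.1 h.1
      obtain ⟨l', _, rfl⟩ := mem_keys.1 h'.1
      obtain ⟨a, b⟩ := glue_inj d (e + 1) hd l l' R R' heq
      rw [a, b]
  · intro p hp q hq hpq
    rw [Function.onFun, Finset.disjoint_left]
    intro L hL hL'
    obtain ⟨A, hA, B, hB, rfl⟩ := Finset.mem_image₂.1 hL
    obtain ⟨A', hA', B', hB', heq⟩ := Finset.mem_image₂.1 hL'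
    apply hpq
    obtain ⟨l, hl, rfl⟩ := mem_keys.1 hA
    obtain ⟨l', hl', rfl⟩ := mem_keys.1 hA'
    obtain ⟨a, b⟩ := glue_inj d (e + 1) hd l' l B' B heq
    have h1 := length_of_mem_keys hA
    have h1' := length_of_mem_keys hA'
    have h2 := length_of_mem_keys hB
    have h2' := length_of_mem_keys hB'
    rw [a] at h1'
    rw [b] at h2'
    ext <;> omega
  · rw [Finset.disjoint_left]
    intro L hL hL'
    split_ifs at hL with hn
    · obtain ⟨p, hp, h⟩ := Finset.mem_biUnion.1 hL'
      obtain ⟨A, hA, B, hB, rfl⟩ := Finset.mem_image₂.1 h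
      obtain ⟨l, hl, rfl⟩ := mem_keys.1 hA
      obtain ⟨r, hr, rfl⟩ := mem_keys.1 hB
      have h1 := numLeaves_pos l
      have h2 := numLeaves_pos r
      simp only [Finset.HasAntidiagonal.mem_antidiagonal] at hp
      omega
    · simp at hL

theorem keys_one_card (d n : ℕ) : (keys d 1 n).card = (keys d 0 n).card := by
  apply le_antisymm
  · let g : List (ℕ × ℕ) → List (ℕ × ℕ) := fun L => match L with
      | [] => []
      | x :: M => x :: M.map fun p => (p.1, 1)
    have : keys d 1 n = (keys d 0 n).image g := by
      rw [keys, keys, Finset.image_image]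
      refine Finset.image_congr fun t _ => ?_
      obtain ⟨x, M, h1, h2, h3⟩ := leafDepths_head t
      simp only [key, h1, List.map_cons, Function.comp, g, List.map_map, h2, zero_le,
        inf_of_le_left]
      congr 1
      refine List.map_congr_left fun p hp => ?_
      have := h3 p hp
      simp only [Prod.mk.injEq, true_and, Function.comp]
      omega
    rw [this]
    exact Finset.card_image_le
  · let g : List (ℕ × ℕ) → List (ℕ × ℕ) := fun L => L.map fun p => (p.1, 0)
    have : keys d 0 n = (keys d 1 n).image g := by
      rw [keys, keys, Finset.image_image]
      refine Finset.image_congr fun t _ => ?_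
      simp [key, g]
    rw [this]
    exact Finset.card_image_le

theorem keys_swap_le (d e n : ℕ) : (keys e d n).card ≤ (keys d e n).card := by
  have : keys e d n ⊆ (keys d e n).image fun L => (L.map Prod.swap).reverse := by
    intro L hL
    obtain ⟨t, ht, rfl⟩ := mem_keys.1 hL
    refine Finset.mem_image.2 ⟨key d e t.mirror, mem_keys.2 ⟨_, ?_, rfl⟩, ?_⟩
    · rw [numLeaves_mirror, ht]
    · rw [← key_mirror, mirror_mirror]
  exact (Finset.card_le_card this).trans Finset.card_image_le

theorem keys_swap (d e n : ℕ) : (keys e d n).card = (keys d e n).card :=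
  le_antisymm (keys_swap_le _ _ _) (keys_swap_le _ _ _)

theorem exists_tree (n : ℕ) : ∃ t : BTree, t.numLeaves = n + 1 := by
  induction n with
  | zero => exact ⟨leaf, rfl⟩
  | succ n ih =>
    obtain ⟨t, ht⟩ := ih
    exact ⟨node leaf t, by simp [numLeaves, ht]; omega⟩

theorem keys_zero (d e : ℕ) : (keys d e 0).card = 0 := by
  rw [Finset.card_eq_zero, Finset.eq_empty_iff_forall_notMem]
  intro L hL
  obtain ⟨t, ht, rfl⟩ := mem_keys.1 hL
  have := numLeaves_pos t
  omega

theorem keys_one_one (n : ℕ) : (keys 1 1 (n + 1)).card = 1 := by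
  rw [keys_one_card, keys_swap, keys_one_card, Finset.card_eq_one]
  refine ⟨List.replicate (n + 1) (0, 0), ?_⟩
  ext L
  rw [Finset.mem_singleton]
  have key0 : ∀ t : BTree, t.numLeaves = n + 1 → key 0 0 t = List.replicate (n + 1) (0, 0) := by
    intro t ht
    rw [List.eq_replicate_iff, length_key]
    refine ⟨ht, fun b hb => ?_⟩
    simp only [key, List.mem_map] at hb
    obtain ⟨p, _, rfl⟩ := hb
    simp
  constructor
  · intro hL
    obtain ⟨t, ht, rfl⟩ := mem_keys.1 hL
    exact key0 t ht
  · rintro rfl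
    obtain ⟨t, ht⟩ := exists_tree n
    exact mem_keys.2 ⟨t, ht, key0 t ht⟩

theorem deRel_iff (d e : ℕ) (t t' : BTree) : DeRel d e t t' ↔ key d e t = key d e t' := by
  unfold DeRel DepthEq ld rd key
  generalize t.leafDepths = L
  generalize t'.leafDepths = L'
  induction L generalizing L' with
  | nil => cases L' <;> simp
  | cons a L ih =>
    cases L' with
    | nil => simp
    | cons b L' =>
      have := ih L'
      simp only [List.map_cons, List.forall₂_cons, List.cons.injEq, Prod.mk.injEq]
      rw [← this]
      have h1 : (min a.1 b.1 < d → a.1 = b.1) ↔ min a.1 d = min b.1 d := by omega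
      have h2 : (min a.2 b.2 < e → a.2 = b.2) ↔ min a.2 e = min b.2 e := by omega
      rw [h1, h2]
      tauto

theorem Cde_eq (d e n : ℕ) : Cde d e n = (keys d e (n + 1)).card := by
  let f : Tn n → List (ℕ × ℕ) := fun t => key d e t.1
  have hrel : (fun t t' : Tn n => DeRel d e t.1 t'.1) = (Setoid.ker f).r := by
    funext t t'
    exact propext (deRel_iff d e t.1 t'.1)
  unfold Cde
  rw [hrel]
  have e1 : Nat.card (Quot (Setoid.ker f).r) = Nat.card (Set.range f) :=
    Nat.card_congr (Setoid.quotientKerEquivRange f)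
  rw [e1]
  have : Set.range f = (keys d e (n + 1) : Set _) := by
    ext L
    simp only [Set.mem_range, Finset.mem_coe, mem_keys]
    constructor
    · rintro ⟨t, rfl⟩
      exact ⟨t.1, t.2, rfl⟩
    · rintro ⟨t, ht, rfl⟩
      exact ⟨⟨t, ht⟩, rfl⟩
  rw [this]
  simp

end BTree

/-! ## Generating functions -/

open BTree PowerSeries in
theorem CdeX_eq (d e : ℕ) (hd : 1 ≤ d) (he : 1 ≤ e) :
    CdeX d e = PowerSeries.mk fun m => ((keys d e m).card : ℚ) := by
  ext m
  unfold CdeX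
  rw [coeff_mk, coeff_mk]
  cases m with
  | zero => simp [keys_zero]
  | succ n => simp [Cde_eq, max_eq_left hd, max_eq_left he]

open BTree PowerSeries in
theorem CdeX_rec (d e : ℕ) (hd : 1 ≤ d) :
    CdeX (d + 1) (e + 1) = X + CdeX d (e + 1) *
      PowerSeries.mk fun m => ((keys (d + 1) e m).card : ℚ) := by
  rw [CdeX_eq _ _ (by omega) (by omega), CdeX_eq _ _ hd (by omega)]
  ext n
  rw [coeff_mk, card_keys_succ _ _ _ hd, map_add, coeff_mul, coeff_X]
  push_cast
  simp only [coeff_mk]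

theorem CdeX_rec2 (d : ℕ) (hd : 1 ≤ d) :
    CdeX (d + 1) 2 = PowerSeries.X + CdeX d 2 * CdeX (d + 1) 1 := by
  rw [CdeX_rec d 1 hd, CdeX_eq (d + 1) 1 (by omega) (by omega)]

theorem CdeX_rec1 (d : ℕ) (hd : 1 ≤ d) :
    CdeX (d + 1) 1 = PowerSeries.X + CdeX d 1 * CdeX (d + 1) 1 := by
  conv_lhs => rw [CdeX_rec d 0 hd]
  rw [CdeX_eq (d + 1) 1 (by omega) (by omega)]
  simp only [BTree.keys_one_card]

theorem CdeX_one_two : CdeX 1 2 = CdeX 2 1 := by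
  rw [CdeX_eq _ _ (by omega) (by omega), CdeX_eq _ _ (by omega) (by omega)]
  simp only [BTree.keys_swap 1 2]

open PowerSeries in
theorem CdeX_one_one : (1 - X) * CdeX 1 1 = X := by
  rw [CdeX_eq _ _ (by omega) (by omega)]
  ext n
  rw [sub_mul, one_mul, map_sub, coeff_X]
  cases n with
  | zero => simp [BTree.keys_zero]
  | succ n =>
    rw [coeff_succ_X_mul, coeff_mk, coeff_mk, BTree.keys_one_one]
    cases n with
    | zero => simp [BTree.keys_zero]
    | succ n => simp [BTree.keys_one_one]

theorem FibP_succ (n : ℕ) : FibP (n + 2) = FibP (n + 1) - PowerSeries.X * FibP n := by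
  rw [FibP]

theorem FibP_three : FibP 3 = 1 - PowerSeries.X := by
  simp [FibP]

theorem FibP_four : FibP 4 = 1 - 2 * PowerSeries.X := by
  simp [FibP]; ring

theorem CdeX_one_Fib (d : ℕ) (hd : 1 ≤ d) :
    CdeX d 1 * FibP (d + 2) = PowerSeries.X * FibP (d + 1) := by
  induction d, hd using Nat.le_induction with
  | base =>
    have := CdeX_one_one
    simp only [Nat.reduceAdd]
    rw [FibP_three, mul_comm, this]
    simp [FibP]
  | succ d hd ih =>
    have h := CdeX_rec1 d hd
    have hF := FibP_succ (d + 1)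
    rw [show d + 1 + 2 = d + 3 from rfl, show d + 1 + 1 = d + 2 from rfl] at *
    linear_combination (CdeX (d + 1) 1) * hF + CdeX (d + 1) 1 * ih + FibP (d + 2) * h

theorem main_gf (d : ℕ) (hd : 1 ≤ d) :
    (1 - 2 * PowerSeries.X) * FibP (d + 2) * (CdeX d 2 - CdeX d 1) =
      PowerSeries.X ^ (d + 2) := by
  induction d, hd using Nat.le_induction with
  | base =>
    have h1 := CdeX_one_one
    have h2 := CdeX_one_Fib 2 (by omega)
    simp only [Nat.reduceAdd] at h2 ⊢
    rw [FibP_four, FibP_three] at h2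
    rw [FibP_three, CdeX_one_two]
    linear_combination (1 - PowerSeries.X) * h2 - (1 - 2 * PowerSeries.X) * h1
  | succ d hd ih =>
    have h1 := CdeX_rec1 d hd
    have h2 := CdeX_rec2 d hd
    have h3 := CdeX_one_Fib (d + 1) (by omega)
    rw [show d + 1 + 2 = d + 3 from rfl, show d + 1 + 1 = d + 2 from rfl] at *
    have h4 : CdeX (d + 1) 2 - CdeX (d + 1) 1 =
        (CdeX d 2 - CdeX d 1) * CdeX (d + 1) 1 := by
      linear_combination h2 - h1
    rw [h4]
    linear_combination (1 - 2 * PowerSeries.X) * (CdeX d 2 - CdeX d 1) * h3 + PowerSeries.X * ih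

/-! ## Explicit coefficients -/

open PowerSeries in
theorem coeff_FibP (k : ℕ) : ∀ i : ℕ,
    coeff i (FibP (k + 1)) = (-1 : ℚ) ^ i * ((k - i).choose i : ℚ) := by
  induction k using Nat.twoStepInduction with
  | zero =>
    intro i
    cases i with
    | zero => simp [FibP]
    | succ i => simp [FibP, coeff_one]
  | one =>
    intro i
    rcases i with _ | _ | i
    · simp [FibP]
    · simp [FibP, coeff_one]
    · simp [FibP, coeff_one]
  | more k ih1 ih2 =>
    intro i
    rw [show k + 2 + 1 = (k + 1) + 2 from rfl, FibP_succ, map_sub]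
    cases i with
    | zero =>
      rw [ih2]
      simp
    | succ i =>
      rw [coeff_succ_X_mul, ih1, ih2]
      have : (k + 2 - (i + 1)).choose (i + 1) =
          (k + 1 - (i + 1)).choose (i + 1) + (k - i).choose i := by
        rcases le_or_gt i k with h | h
        · rw [show k + 2 - (i + 1) = (k - i) + 1 by omega,
            show k + 1 - (i + 1) = k - i by omega, Nat.choose_succ_succ, add_comm]
        · rw [show k + 2 - (i + 1) = 0 by omega, show k + 1 - (i + 1) = 0 by omega,
            show k - i = 0 by omega]
          obtain ⟨j, rfl⟩ : ∃ j, i = j + 1 := ⟨i - 1, by omega⟩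
          simp
      rw [this]
      push_cast
      ring

/-- Weighted sum over compositions. -/
def compSum (f : ℕ → ℚ) (m : ℕ) : ℚ := ∑ α : Composition m, (α.blocks.map f).prod

theorem compSum_zero (f : ℕ → ℚ) : compSum f 0 = 1 := by
  unfold compSum
  have h : ∀ α : Composition 0, (α.blocks.map f).prod = 1 := by
    intro α
    rw [α.blocks_eq_nil.2 rfl]
    simp
  rw [Finset.sum_congr rfl fun α _ => h α]
  simp [composition_card]

/-- Prepend a part to a composition. -/
def consComp {m : ℕ} (a b : ℕ) (h : a + b = m) (β : Composition b) : Composition (m + 1) where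
  blocks := (a + 1) :: β.blocks
  blocks_pos := by
    intro i hi
    rcases List.mem_cons.1 hi with rfl | hi
    · omega
    · exact β.blocks_pos hi
  blocks_sum := by
    rw [List.sum_cons, β.blocks_sum]; omega

theorem compSum_succ (f : ℕ → ℚ) (m : ℕ) :
    compSum f (m + 1) =
      ∑ p ∈ Finset.HasAntidiagonal.antidiagonal m, f (p.1 + 1) * compSum f p.2 := by
  unfold compSum
  simp only [Finset.mul_sum]
  rw [Finset.sum_sigma']
  symm
  refine Finset.sum_bij (fun x hx => consComp x.1.1 x.1.2
    (Finset.HasAntidiagonal.mem_antidiagonal.1 (Finset.mem_sigma.1 hx).1) x.2) ?_ ?_ ?_ ?_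
  · intro x hx
    exact Finset.mem_univ _
  · rintro ⟨⟨a, b⟩, β⟩ hx ⟨⟨a', b'⟩, β'⟩ hx' h
    have h1 := Finset.HasAntidiagonal.mem_antidiagonal.1 (Finset.mem_sigma.1 hx).1
    have h2 := Finset.HasAntidiagonal.mem_antidiagonal.1 (Finset.mem_sigma.1 hx').1
    have h3 := congrArg Composition.blocks h
    simp only [consComp, List.cons.injEq] at h1 h2 h3
    obtain rfl : a = a' := by omega
    obtain rfl : b = b' := by omega
    have : β = β' := Composition.ext h3.2
    rw [this]
  · intro α _
    rcases hα : α.blocks with _ | ⟨a, l⟩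
    · exact absurd (α.blocks_eq_nil.1 hα) (by omega)
    · have hs := α.blocks_sum
      have ha : 0 < a := α.blocks_pos (by rw [hα]; simp)
      rw [hα, List.sum_cons] at hs
      refine ⟨⟨(a - 1, l.sum), ⟨l, fun {i} hi => α.blocks_pos (by rw [hα]; simp [hi]), rfl⟩⟩,
        ?_, ?_⟩
      · refine Finset.mem_sigma.2 ⟨Finset.HasAntidiagonal.mem_antidiagonal.2 ?_,
          Finset.mem_univ _⟩
        simp only
        omega
      · apply Composition.ext
        simp only [consComp, hα, List.cons.injEq, and_true]
        omega
  · rintro ⟨⟨a, b⟩, β⟩ hx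
    simp [consComp]

open PowerSeries in
theorem mul_compSum (F : PowerSeries ℚ) (h0 : coeff 0 F = 1) :
    F * PowerSeries.mk (compSum fun a => - coeff a F) = 1 := by
  ext m
  rw [coeff_mul]
  cases m with
  | zero => simpa [compSum_zero] using h0
  | succ m =>
    rw [Finset.Nat.sum_antidiagonal_succ]
    simp only [coeff_mk]
    rw [h0, compSum_succ]
    simp [coeff_one]

/-- The inner sum of the statement. -/
def innerSum (d m : ℕ) : ℤ :=
  ∑ α ∈ Finset.univ.filter
      (fun α : Composition m => ∀ a ∈ α.blocks, 2 * a ≤ d + 1),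
    (-1 : ℤ) ^ (m - α.length) *
      (α.blocks.map fun a => (((d + 1 - a).choose a : ℕ) : ℤ)).prod

theorem prod_sign (c : ℕ → ℚ) (l : List ℕ) :
    (l.map fun a => -((-1 : ℚ) ^ a * c a)).prod =
      (-1 : ℚ) ^ (l.sum + l.length) * (l.map c).prod := by
  induction l with
  | nil => simp
  | cons a l ih =>
    simp only [List.map_cons, List.prod_cons, ih, List.sum_cons, List.length_cons]
    ring

theorem innerSum_eq (d m : ℕ) :
    (innerSum d m : ℚ) = compSum (fun a => - PowerSeries.coeff a (FibP (d + 2))) m := by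
  unfold innerSum compSum
  rw [Finset.sum_filter]
  push_cast
  refine Finset.sum_congr rfl fun α _ => ?_
  simp only [coeff_FibP (d + 1)]
  rw [prod_sign (fun a => ((d + 1 - a).choose a : ℚ)), α.blocks_sum, α.blocks_length]
  split_ifs with h
  · have hl := α.length_le
    have : (-1 : ℚ) ^ (m + α.length) = (-1) ^ (m - α.length) := by
      obtain ⟨k, hk⟩ := Nat.exists_eq_add_of_le hl
      rw [show m - α.length = k by omega, show m + α.length = k + 2 * α.length by omega,
        pow_add, pow_mul]
      simp
    rw [this, List.map_map]
    simp [Function.comp_def]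
  · push Not at h
    obtain ⟨a, ha, hlt⟩ := h
    have : (α.blocks.map fun a => ((d + 1 - a).choose a : ℚ)).prod = 0 := by
      apply List.prod_eq_zero
      refine List.mem_map.2 ⟨a, ha, ?_⟩
      rw [Nat.choose_eq_zero_of_lt (by omega)]
      simp
    rw [this]
    simp

open PowerSeries in
theorem geom_two : (1 - 2 * X) * (PowerSeries.mk fun i => (2 : ℚ) ^ i) = 1 := by
  ext n
  rw [sub_mul, one_mul, map_sub, mul_assoc, show (2 : PowerSeries ℚ) = C (2 : ℚ) from (map_ofNat C 2).symm,
    coeff_C_mul]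
  cases n with
  | zero => simp
  | succ n =>
    rw [coeff_succ_X_mul, coeff_mk, coeff_mk, coeff_one]
    simp [pow_succ, mul_comm]

open PowerSeries in
theorem diff_eq (d : ℕ) (hd : 1 ≤ d) :
    CdeX d 2 - CdeX d 1 = X ^ (d + 2) * ((PowerSeries.mk fun i => (2 : ℚ) ^ i) *
      PowerSeries.mk fun m => (innerSum d m : ℚ)) := by
  have h1 := main_gf d hd
  have h2 := geom_two
  have h3 := mul_compSum (FibP (d + 2)) (by rw [coeff_FibP (d + 1)]; simp)
  have h4 : (fun m => (innerSum d m : ℚ)) =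
      compSum fun a => - coeff a (FibP (d + 2)) := funext (innerSum_eq d)
  rw [h4]
  generalize (PowerSeries.mk fun i => (2 : ℚ) ^ i) = H at *
  generalize PowerSeries.mk (compSum fun a => - coeff a (FibP (d + 2))) = G at *
  rw [← h1]
  have h5 : (1 - 2 * X) * H * (FibP (d + 2) * G) = 1 := by rw [h2, h3, one_mul]
  linear_combination (-(CdeX d 2 - CdeX d 1)) * h5

open PowerSeries in
theorem explicit (d : ℕ) (hd : 1 ≤ d) (n : ℕ) :
    (Cde d 2 n : ℤ) = (Cde d 1 n : ℤ) +
      ∑ i ∈ Finset.Icc 1 (n - d), (2 : ℤ) ^ (i - 1) * innerSum d (n - d - i) := by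
  have h := congrArg (coeff (n + 1)) (diff_eq d hd)
  rw [map_sub, coeff_X_pow_mul'] at h
  simp only [CdeX, coeff_mk, max_eq_left hd, max_eq_left (show 1 ≤ 2 by omega), max_self] at h
  have key : (if d + 2 ≤ n + 1 then
      coeff (n + 1 - (d + 2)) ((PowerSeries.mk fun i => (2 : ℚ) ^ i) *
        PowerSeries.mk fun m => (innerSum d m : ℚ)) else 0) =
      ((∑ i ∈ Finset.Icc 1 (n - d), (2 : ℤ) ^ (i - 1) * innerSum d (n - d - i) : ℤ) : ℚ) := by
    split_ifs with hn
    · obtain ⟨k, rfl⟩ : ∃ k, n = d + 1 + k := ⟨n - d - 1, by omega⟩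
      rw [show d + 1 + k + 1 - (d + 2) = k by omega, show d + 1 + k - d = k + 1 by omega,
        coeff_mul]
      push_cast
      simp only [coeff_mk]
      rw [Finset.Nat.sum_antidiagonal_eq_sum_range_succ
        (fun i j => (2 : ℚ) ^ i * (innerSum d j : ℚ)), Finset.range_eq_Ico,
        Finset.sum_Ico_eq_sum_range, ← Finset.Ico_add_one_right_eq_Icc,
        Finset.sum_Ico_eq_sum_range]
      refine Finset.sum_congr (by simp) fun i hi => ?_
      rw [show 1 + i - 1 = i by omega, show k + 1 - (1 + i) = k - i by omega, Nat.zero_add]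
    · rw [show n - d = 0 by omega]
      simp
  rw [key] at h
  have : ((Cde d 2 n : ℤ) : ℚ) = (((Cde d 1 n : ℤ) +
      ∑ i ∈ Finset.Icc 1 (n - d), (2 : ℤ) ^ (i - 1) * innerSum d (n - d - i) : ℤ) : ℚ) := by
    rw [Int.cast_add, ← h]
    push_cast
    ring
  exact_mod_cast this

/-- for `d ≥ 2`, `(1-2x)·F_{d+2}(x)·(C^{d,2}(x) - C^d(x)) = x^{d+2}`
(where `C^d(x) := C^{d,1}(x)`), and for `n,d ≥ 2`,
`C^{d,2}_n = C^d_n + Σ_{i=1}^{n-d} 2^{i-1} Σ_α (-1)^{n-d-i-ℓ(α)} Π_j binom(d+1-α_j, α_j)`,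
the inner sum being over compositions `α` of `n-d-i` with `max(α) ≤ (d+1)/2`
(equivalently `2·α_j ≤ d+1` for every part). -/
theorem stmt7 (d : ℕ) (hd : 2 ≤ d) :
    ((1 - 2 * PowerSeries.X) * FibP (d + 2) * (CdeX d 2 - CdeX d 1) =
      PowerSeries.X ^ (d + 2)) ∧
    (∀ n : ℕ, 2 ≤ n →
      (Cde d 2 n : ℤ) = (Cde d 1 n : ℤ) +
        ∑ i ∈ Finset.Icc 1 (n - d), (2 : ℤ) ^ (i - 1) *
          ∑ α ∈ Finset.univ.filter
              (fun α : Composition (n - d - i) => ∀ a ∈ α.blocks, 2 * a ≤ d + 1),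
            (-1 : ℤ) ^ (n - d - i - α.length) *
              (α.blocks.map fun a => (((d + 1 - a).choose a : ℕ) : ℤ)).prod) := by
  exact ⟨main_gf d (by omega), fun n _ => explicit d (by omega) n⟩
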